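/- Let γ : I → ℝ² be a four times continuously differentiable unit-speed curve on an open interval I satisfying ⟨γ(s), γ''(s)⟩ = -1 for all s ∈ I, and let κ(s) = det(γ'(s), γ''(s)) denote its signed curvature, which is nowhere zero on I. Then the function s ↦ κ'(s)/κ(s)³ has identically vanishing derivative on I; in particular κ'/κ³ is constant on I. -/

import Mathlib

/-!
Let `J` be the rotation by `π / 2`, and consider more generally the equation `⟪γ, γ''⟫ = c ≠ 0`.
The Frenet equation `γ'' = κ J γ'` turns it into `κ p = c`, where `p = ⟪J γ', γ⟫` is the support
function, and gives `p' = -κ ⟪γ, γ'⟫`. Hence `κ = c / p` satisfies `κ' / κ ^ 3 = ⟪γ, γ'⟫ / c`, and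
the derivative of `⟪γ, γ'⟫` is `‖γ'‖ ^ 2 + ⟪γ, γ''⟫ = 1 + c`, which vanishes for `c = -1`. The curve
is automatically twice differentiable: neither `γ'` nor `γ''` vanishes, whereas `deriv` returns `0`
where there is no derivative.
-/

open scoped RealInnerProductSpace

open Filter Module Topology

lemma differentiableAt_of_norm_deriv_ne_zero {F : Type*} [NormedAddCommGroup F] [NormedSpace ℝ F]
    {f : ℝ → F} {s : ℝ} (h : ‖deriv f s‖ ≠ 0) : DifferentiableAt ℝ f s :=
  differentiableAt_of_deriv_ne_zero (norm_ne_zero_iff.mp h)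

section InnerProductSpace

variable {E : Type*} [NormedAddCommGroup E] [InnerProductSpace ℝ E]

lemma inner_deriv_eq_zero_of_eventually_norm_eq {f : ℝ → E} {s r : ℝ}
    (hf : DifferentiableAt ℝ f s) (hr : ∀ᶠ u in 𝓝 s, ‖f u‖ = r) : ⟪f s, deriv f s⟫ = 0 := by
  have hconst : (‖f ·‖ ^ 2) =ᶠ[𝓝 s] fun _ => r ^ 2 := hr.mono fun u hu => by simp [hu]
  have hderiv : 2 * ⟪f s, deriv f s⟫ = 0 :=
    hf.hasDerivAt.norm_sq.unique ((hasDerivAt_const s (r ^ 2)).congr_of_eventuallyEq hconst)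
  linarith

lemma differentiableAt_of_inner_deriv_ne_zero {f : ℝ → E} {x : E} {s : ℝ}
    (h : ⟪x, deriv f s⟫ ≠ 0) : DifferentiableAt ℝ f s :=
  differentiableAt_of_deriv_ne_zero fun h0 => h (by rw [h0, inner_zero_right])

lemma hasDerivAt_inner_deriv {γ : ℝ → E} {s : ℝ} (hγ : DifferentiableAt ℝ γ s)
    (hγ' : DifferentiableAt ℝ (deriv γ) s) :
    HasDerivAt (fun u => ⟪γ u, deriv γ u⟫) (‖deriv γ s‖ ^ 2 + ⟪γ s, deriv (deriv γ) s⟫) s := by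
  refine (hγ.hasDerivAt.inner ℝ hγ'.hasDerivAt).congr_deriv ?_
  rw [real_inner_self_eq_norm_sq, add_comm]

end InnerProductSpace

section OrientedPlane

variable {E : Type*} [NormedAddCommGroup E] [InnerProductSpace ℝ E] [Fact (finrank ℝ E = 2)]
  (o : Orientation ℝ E (Fin 2))

lemma inner_smul_add_areaForm_smul_rightAngleRotation (a b : E) :
    ⟪a, b⟫ • a + o.areaForm a b • o.rightAngleRotation a = ‖a‖ ^ 2 • b := by
  refine ext_inner_right ℝ fun x => ?_
  simpa only [inner_add_left, real_inner_smul_left, o.inner_rightAngleRotation_left] using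
    o.inner_mul_inner_add_areaForm_mul_areaForm a b x

lemma hasDerivAt_areaForm {f g : ℝ → E} {f' g' : E} {s : ℝ} (hf : HasDerivAt f f' s)
    (hg : HasDerivAt g g' s) :
    HasDerivAt (fun u => o.areaForm (f u) (g u)) (o.areaForm (f s) g' + o.areaForm f' (g s)) s :=
  o.areaForm'.hasDerivAt_of_bilinear (fun _ => hf) (fun _ => hg)

/-- The signed curvature `κ = ω(γ', γ'')` of a unit-speed curve `γ` in an oriented plane with area
form `ω`. There is no normalization by the speed, so for other parametrizations this is not the
geometric curvature. -/
noncomputable def signedCurvature (γ : ℝ → E) (s : ℝ) : ℝ :=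
  o.areaForm (deriv γ s) (deriv (deriv γ) s)

/-- The support function `p = ω(γ', γ) = ⟪J γ', γ⟫` of a unit-speed curve `γ`: the signed distance
from the origin to the tangent line, measured along the left normal `J γ'`. It is negative on a
counterclockwise circle about the origin. -/
noncomputable def supportFunction (γ : ℝ → E) (s : ℝ) : ℝ :=
  o.areaForm (deriv γ s) (γ s)

variable {γ : ℝ → E} {s c : ℝ}

lemma deriv_deriv_eq_signedCurvature_smul (hγ' : DifferentiableAt ℝ (deriv γ) s)
    (hunit : ∀ᶠ u in 𝓝 s, ‖deriv γ u‖ = 1) :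
    deriv (deriv γ) s = signedCurvature o γ s • o.rightAngleRotation (deriv γ s) := by
  have horth := inner_deriv_eq_zero_of_eventually_norm_eq hγ' hunit
  have hdecomp :=
    inner_smul_add_areaForm_smul_rightAngleRotation o (deriv γ s) (deriv (deriv γ) s)
  rw [horth, hunit.self_of_nhds, zero_smul, zero_add, one_pow, one_smul] at hdecomp
  exact hdecomp.symm

lemma signedCurvature_mul_supportFunction (hγ' : DifferentiableAt ℝ (deriv γ) s)
    (hunit : ∀ᶠ u in 𝓝 s, ‖deriv γ u‖ = 1) :
    signedCurvature o γ s * supportFunction o γ s = ⟪γ s, deriv (deriv γ) s⟫ := by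
  rw [deriv_deriv_eq_signedCurvature_smul o hγ' hunit, real_inner_smul_right, real_inner_comm,
    o.inner_rightAngleRotation_left, supportFunction]

lemma hasDerivAt_supportFunction (hγ' : DifferentiableAt ℝ (deriv γ) s)
    (hunit : ∀ᶠ u in 𝓝 s, ‖deriv γ u‖ = 1) :
    HasDerivAt (supportFunction o γ) (-(signedCurvature o γ s * ⟪γ s, deriv γ s⟫)) s := by
  have hγ := differentiableAt_of_norm_deriv_ne_zero (hunit.self_of_nhds ▸ one_ne_zero)
  refine (hasDerivAt_areaForm o hγ'.hasDerivAt hγ.hasDerivAt).congr_deriv ?_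
  rw [o.areaForm_apply_self, zero_add, deriv_deriv_eq_signedCurvature_smul o hγ' hunit, map_smul,
    LinearMap.smul_apply, o.areaForm_rightAngleRotation_left, smul_eq_mul, mul_neg,
    real_inner_comm]

lemma deriv_signedCurvature_div_pow_three (hc : c ≠ 0)
    (hunit : ∀ᶠ u in 𝓝 s, ‖deriv γ u‖ = 1)
    (hinc : ∀ᶠ u in 𝓝 s, ⟪γ u, deriv (deriv γ) u⟫ = c) :
    deriv (signedCurvature o γ) s / signedCurvature o γ s ^ 3 = ⟪γ s, deriv γ s⟫ / c := by
  have hγ' : ∀ᶠ u in 𝓝 s, DifferentiableAt ℝ (deriv γ) u :=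
    hinc.mono fun u hu => differentiableAt_of_inner_deriv_ne_zero (hu ▸ hc)
  have hmul : ∀ᶠ u in 𝓝 s, signedCurvature o γ u * supportFunction o γ u = c := by
    filter_upwards [hγ', hunit.eventually_nhds, hinc] with u hdiff hunit_u hinc_u
    rw [signedCurvature_mul_supportFunction o hdiff hunit_u, hinc_u]
  have hmul_s := hmul.self_of_nhds
  have hκ : signedCurvature o γ s ≠ 0 := left_ne_zero_of_mul (hmul_s ▸ hc)
  have hp : supportFunction o γ s ≠ 0 := right_ne_zero_of_mul (hmul_s ▸ hc)
  have heq : signedCurvature o γ =ᶠ[𝓝 s] fun u => c / supportFunction o γ u :=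
    hmul.mono fun u hu => eq_div_of_mul_eq (right_ne_zero_of_mul (hu ▸ hc)) hu
  have hderiv := ((hasDerivAt_const s c).div
    (hasDerivAt_supportFunction o hγ'.self_of_nhds hunit) hp).congr_of_eventuallyEq heq
  rw [hderiv.deriv, ← hmul_s]
  field_simp
  ring

lemma hasDerivAt_deriv_signedCurvature_div_pow_three (hc : c ≠ 0)
    (hunit : ∀ᶠ u in 𝓝 s, ‖deriv γ u‖ = 1)
    (hinc : ∀ᶠ u in 𝓝 s, ⟪γ u, deriv (deriv γ) u⟫ = c) :
    HasDerivAt (fun u => deriv (signedCurvature o γ) u / signedCurvature o γ u ^ 3)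
      (1 + c⁻¹) s := by
  have hunit_s := hunit.self_of_nhds
  have hinc_s := hinc.self_of_nhds
  have hquot : ∀ᶠ u in 𝓝 s, deriv (signedCurvature o γ) u / signedCurvature o γ u ^ 3 =
      ⟪γ u, deriv γ u⟫ / c := by
    filter_upwards [hunit.eventually_nhds, hinc.eventually_nhds] with u hunit_u hinc_u
    exact deriv_signedCurvature_div_pow_three o hc hunit_u hinc_u
  have hinner := hasDerivAt_inner_deriv
    (differentiableAt_of_norm_deriv_ne_zero (hunit_s ▸ one_ne_zero))
    (differentiableAt_of_inner_deriv_ne_zero (hinc_s ▸ hc))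
  refine ((hinner.div_const c).congr_of_eventuallyEq hquot).congr_deriv ?_
  rw [hunit_s, hinc_s]
  field_simp
  ring

theorem stmt5_general (I : Set ℝ) (hI : IsOpen I) (hI' : I.OrdConnected) (hc : c ≠ 0)
    (hunit : ∀ s ∈ I, ‖deriv γ s‖ = 1) (hinc : ∀ s ∈ I, ⟪γ s, deriv (deriv γ) s⟫ = c) :
    (∀ s ∈ I, HasDerivAt (fun u => deriv (signedCurvature o γ) u / signedCurvature o γ u ^ 3)
      (1 + c⁻¹) s) ∧
    (∃ C : ℝ, ∀ s ∈ I,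
      deriv (signedCurvature o γ) s / signedCurvature o γ s ^ 3 = (1 + c⁻¹) * s + C) := by
  have hquot : ∀ s ∈ I, HasDerivAt
      (fun u => deriv (signedCurvature o γ) u / signedCurvature o γ u ^ 3) (1 + c⁻¹) s :=
    fun s hs => hasDerivAt_deriv_signedCurvature_div_pow_three o hc
      ((hI.eventually_mem hs).mono hunit) ((hI.eventually_mem hs).mono hinc)
  have hlin : ∀ s, HasDerivAt (fun u => (1 + c⁻¹) * u) (1 + c⁻¹) s :=
    fun _ => hasDerivAt_const_mul _
  exact ⟨hquot, hI.exists_eq_add_of_deriv_eq hI'.isPreconnected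
    (fun s hs => (hquot s hs).differentiableAt.differentiableWithinAt)
    (fun s _ => (hlin s).differentiableAt.differentiableWithinAt)
    fun s hs => (hquot s hs).deriv.trans (hlin s).deriv.symm⟩

end OrientedPlane

instance fact_finrank_euclideanSpace_fin_two : Fact (finrank ℝ (EuclideanSpace ℝ (Fin 2)) = 2) :=
  ⟨finrank_euclideanSpace_fin⟩

lemma areaForm_basisFun_orientation (v w : EuclideanSpace ℝ (Fin 2)) :
    (EuclideanSpace.basisFun (Fin 2) ℝ).toBasis.orientation.areaForm v w =
      Matrix.det !![v 0, w 0; v 1, w 1] := by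
  rw [Orientation.areaForm_to_volumeForm,
    Orientation.volumeForm_robust _ (EuclideanSpace.basisFun (Fin 2) ℝ) rfl, Basis.det_apply]
  congr 1
  ext i j
  fin_cases i <;> fin_cases j <;> simp [Basis.toMatrix_apply]

/-- For a C⁴ unit-speed planar curve `γ` on an open interval `I` with `⟨γ, γ''⟩ ≡ -1`
and nowhere-vanishing signed curvature `κ = det(γ', γ'')`, the function `κ'/κ³` has
identically vanishing derivative on `I`; in particular it is constant on `I`. -/
theorem stmt5 (I : Set ℝ) (hI : IsOpen I) (hI' : I.OrdConnected)
    (γ : ℝ → EuclideanSpace ℝ (Fin 2)) (hγ : ContDiffOn ℝ 4 γ I)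
    (hunit : ∀ s ∈ I, ‖deriv γ s‖ = 1)
    (hinc : ∀ s ∈ I, ⟪γ s, deriv (deriv γ) s⟫ = -1)
    (κ : ℝ → ℝ)
    (hκ : ∀ s : ℝ, κ s =
      Matrix.det !![deriv γ s 0, deriv (deriv γ) s 0;
                    deriv γ s 1, deriv (deriv γ) s 1])
    (hκ0 : ∀ s ∈ I, κ s ≠ 0) :
    (∀ s ∈ I, deriv (fun u => deriv κ u / κ u ^ 3) s = 0) ∧
    (∃ C : ℝ, ∀ s ∈ I, deriv κ s / κ s ^ 3 = C) := by
  obtain rfl : κ = signedCurvature (EuclideanSpace.basisFun (Fin 2) ℝ).toBasis.orientation γ :=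
    funext fun s => (hκ s).trans (areaForm_basisFun_orientation _ _).symm
  simpa using (stmt5_general _ I hI hI' (by norm_num) hunit hinc).imp_left fun h s hs =>
    (h s hs).deriv
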